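/- arXiv:1408.2439 — 2 statements merged into one kernel-verified Lean document; each statement's English description precedes it below -/
import Mathlib

section
/- Let Δ be a root basis of level 2 in a non-degenerate quadratic space (V,B), and let ω_I ∈ Δ* be a space-like weight. Then for every α ∈ Δ∖Δ_I one has B(α,ω_I)² ≥ B(ω_I,ω_I); consequently B(ω_I,ω_I) ≤ min{B(α,ω_I)² : α ∈ Δ∖Δ_I} = 1. -/
open scoped BigOperators

namespace BoydMaxwell

variable {V : Type*} [AddCommGroup V] [Module ℝ V]

/-- `(V, B)` is a Lorentz space: `B` is non-degenerate with exactly one negative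
eigenvalue, i.e. there is a time-like vector but every subspace on which `B` is
negative definite has dimension at most `1`. -/
def IsLorentz (B : LinearMap.BilinForm ℝ V) : Prop :=
  B.Nondegenerate ∧ (∃ v : V, B v v < 0) ∧
    ∀ W : Submodule ℝ V, (∀ v ∈ W, v ≠ 0 → B v v < 0) → Module.finrank ℝ W ≤ 1

/-- A root basis in the quadratic space `(V, B)`. -/
structure IsRootBasis (B : LinearMap.BilinForm ℝ V) (Δ : Finset V) : Prop where
  unit : ∀ α ∈ Δ, B α α = 1
  offdiag : ∀ α ∈ Δ, ∀ β ∈ Δ, α ≠ β →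
    B α β ≤ -1 ∨ ∃ k : ℕ, 2 ≤ k ∧ B α β = -Real.cos (Real.pi / k)
  posIndep : ∀ c : V → ℝ, (∀ α ∈ Δ, 0 ≤ c α) →
    (∑ α ∈ Δ, c α • α) = 0 → ∀ α ∈ Δ, c α = 0
  spans : Submodule.span ℝ (Δ : Set V) = ⊤

/-- The reflection `s_α : x ↦ x - 2 B(α,x) α`. -/
def reflection (B : LinearMap.BilinForm ℝ V) (α : V) : V →ₗ[ℝ] V :=
  LinearMap.id - (B α).smulRight ((2 : ℝ) • α)

/-- The Weyl group `W`: the subgroup of linear automorphisms generated by the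
reflections in the simple roots. -/
def weylGroup (B : LinearMap.BilinForm ℝ V) (Δ : Finset V) : Subgroup (V ≃ₗ[ℝ] V) :=
  Subgroup.closure { g : V ≃ₗ[ℝ] V | ∃ α ∈ Δ, (g : V →ₗ[ℝ] V) = reflection B α }

/-- The set of roots `Φ = W(Δ)`. -/
def roots (B : LinearMap.BilinForm ℝ V) (Δ : Finset V) : Set V :=
  { x | ∃ w ∈ weylGroup B Δ, ∃ α ∈ Δ, x = w α }

/-- The polyhedral cone of non-negative linear combinations of a finite set. -/
def cone (Δ : Finset V) : Set V :=
  { x | ∃ c : V → ℝ, (∀ α ∈ Δ, 0 ≤ c α) ∧ x = ∑ α ∈ Δ, c α • α }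

/-- `F` is a face of the convex set `C`. -/
def IsFace (C F : Set V) : Prop :=
  F ⊆ C ∧ Convex ℝ F ∧ ∀ x ∈ C, ∀ y ∈ C, ∀ t : ℝ, 0 < t → t < 1 →
    t • x + (1 - t) • y ∈ F → x ∈ F ∧ y ∈ F

/-- `I ⊆ Δ` is an `l`-facial subset: `Cone(I)` is a face of `Cone(Δ)` and
`Span(I)` has codimension `l` in `V`. -/
def IsFacial (Δ I : Finset V) (l : ℕ) : Prop :=
  I ⊆ Δ ∧ IsFace (cone Δ) (cone I) ∧
    Module.finrank ℝ (Submodule.span ℝ (I : Set V)) + l = Module.finrank ℝ V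

/-- `B` is positive semidefinite on the span of every `l`-facial subset. -/
def LevelLE (B : LinearMap.BilinForm ℝ V) (Δ : Finset V) (l : ℕ) : Prop :=
  ∀ I : Finset V, IsFacial Δ I l → ∀ x ∈ Submodule.span ℝ (I : Set V), 0 ≤ B x x

/-- The root system generated by `Δ` has level exactly `l`: `l` is the smallest
integer such that `B` is positive semidefinite on the span of every `l`-facial
subset of `Δ`. -/
def HasLevel (B : LinearMap.BilinForm ℝ V) (Δ : Finset V) (l : ℕ) : Prop :=
  LevelLE B Δ l ∧ ∀ m : ℕ, m < l → ¬ LevelLE B Δ m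

/-- `ω` is the weight associated to the `1`-facial subset `I`. -/
def IsWeight (B : LinearMap.BilinForm ℝ V) (Δ I : Finset V) (ω : V) : Prop :=
  IsFacial Δ I 1 ∧ (∀ α ∈ I, B α ω = 0) ∧
    (∀ α ∈ Δ, α ∉ I → 0 < B α ω) ∧
    (∀ α ∈ Δ, α ∉ I → 1 ≤ B α ω) ∧ (∃ α ∈ Δ, α ∉ I ∧ B α ω = 1)

/-- The set `Δ*` of weights. -/
def weights (B : LinearMap.BilinForm ℝ V) (Δ : Finset V) : Set V :=
  { ω | ∃ I : Finset V, IsWeight B Δ I ω }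

/-- The orbit `Ω = W(Δ*)`. -/
def Omega (B : LinearMap.BilinForm ℝ V) (Δ : Finset V) : Set V :=
  { x | ∃ w ∈ weylGroup B Δ, ∃ ω ∈ weights B Δ, x = w ω }

/-- Two vectors are disjoint: `B(x,y) ≤ 0` and `B` is not positive definite on
`Span{x,y}`. -/
def DisjointVec (B : LinearMap.BilinForm ℝ V) (x y : V) : Prop :=
  B x y ≤ 0 ∧ ¬ ∀ z ∈ Submodule.span ℝ ({x, y} : Set V), z ≠ 0 → 0 < B z z

/-- The fundamental chamber `C* = {x | B(x, α) ≥ 0 for all α ∈ Δ}`. -/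
def chamber (B : LinearMap.BilinForm ℝ V) (Δ : Finset V) : Set V :=
  { x | ∀ α ∈ Δ, 0 ≤ B x α }

/-- The Tits cone `T = ⋃_{w ∈ W} w(C*)`. -/
def titsCone (B : LinearMap.BilinForm ℝ V) (Δ : Finset V) : Set V :=
  { x | ∃ w ∈ weylGroup B Δ, ∃ y ∈ chamber B Δ, x = w y }

/-- The convex cone generated by an arbitrary set. -/
def coneOf (X : Set V) : Set V :=
  { x | ∃ (s : Finset V) (c : V → ℝ), (↑s ⊆ X) ∧ (∀ v ∈ s, 0 ≤ c v) ∧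
      x = ∑ v ∈ s, c v • v }


/-- Fourier–Motzkin: a finitely generated cone is cut out by finitely many functionals. -/
theorem cone_eq_dual {V : Type*} [AddCommGroup V] [Module ℝ V] [FiniteDimensional ℝ V]
    (I : Finset V) : ∃ F : Finset (Module.Dual ℝ V), ∀ y, y ∈ cone I ↔ ∀ f ∈ F, 0 ≤ f y := by
  classical
  induction I using Finset.induction_on with
  | empty =>
    let b := Module.finBasis ℝ V
    refine ⟨Finset.univ.image (fun i => b.coord i) ∪ Finset.univ.image (fun i => - b.coord i), ?_⟩
    intro y
    constructor
    · rintro ⟨c, _, rfl⟩ f _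
      simp
    · intro h
      refine ⟨0, by simp, ?_⟩
      simp only [Finset.sum_empty]
      apply b.ext_elem
      intro i
      have h1 := h (b.coord i) (by simp)
      have h2 := h (-b.coord i) (by simp)
      simp at h1 h2 ⊢
      linarith
  | insert a I ha ih =>
    obtain ⟨F, hF⟩ := ih
    have hmem : ∀ y, y ∈ cone (insert a I) ↔ ∃ s : ℝ, 0 ≤ s ∧ y - s • a ∈ cone I := by
      intro y
      constructor
      · rintro ⟨c, hc, rfl⟩
        refine ⟨c a, hc a (by simp), c, fun β hβ => hc β (by simp [hβ]), ?_⟩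
        rw [Finset.sum_insert ha]; abel
      · rintro ⟨s, hs, c, hc, h⟩
        refine ⟨fun β => if β = a then s else c β, ?_, ?_⟩
        · intro β hβ
          by_cases hb : β = a
          · simp [hb, hs]
          · simp only [hb, if_false]
            exact hc β ((Finset.mem_insert.1 hβ).resolve_left hb)
        · rw [Finset.sum_insert ha]
          have : ∑ β ∈ I, (if β = a then s else c β) • β = ∑ β ∈ I, c β • β := by
            apply Finset.sum_congr rfl
            intro β hβ
            have : β ≠ a := fun h => ha (h ▸ hβ)
            simp [this]
          rw [this, ← h]; simp
    refine ⟨F.filter (fun f => 0 ≤ f a) ∪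
      ((F.filter (fun f => 0 < f a)) ×ˢ (F.filter (fun f => f a < 0))).image
        (fun q => (q.1 a) • q.2 - (q.2 a) • q.1), ?_⟩
    intro y
    rw [hmem]
    constructor
    · rintro ⟨s, hs, h⟩ f hf
      rw [hF] at h
      simp only [Finset.mem_union, Finset.mem_filter, Finset.mem_image, Finset.mem_product] at hf
      rcases hf with ⟨h1, h2⟩ | ⟨⟨f1, f2⟩, ⟨⟨h1, h2⟩, h3, h4⟩, rfl⟩
      · have := h f h1
        simp at this
        nlinarith
      · have e1 := h f1 h1
        have e2 := h f2 h3
        simp at e1 e2 h2 h4 ⊢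
        nlinarith
    · intro h
      have hA : ∀ f ∈ F, 0 ≤ f a → 0 ≤ f y := fun f hf h0 =>
        h f (by simp [hf, h0])
      have hB : ∀ f ∈ F, ∀ g ∈ F, 0 < f a → g a < 0 → 0 ≤ f a * g y - g a * f y := by
        intro f hf g hg h1 h2
        have := h (f a • g - g a • f) (by
          apply Finset.mem_union_right
          apply Finset.mem_image.2
          exact ⟨(f, g), by simp [hf, hg, h1, h2], rfl⟩)
        simpa using this
      -- choose s as the largest lower bound
      let L : Finset ℝ := insert 0 ((F.filter (fun f => f a < 0)).image (fun g => g y / g a))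
      have hL : L.Nonempty := ⟨0, by simp [L]⟩
      refine ⟨L.max' hL, L.le_max' 0 (by simp [L]), ?_⟩
      rw [hF]
      intro f hf
      have hmax := L.max'_mem hL
      set s := L.max' hL with hs
      simp only [map_sub, map_smul, smul_eq_mul]
      rcases lt_trichotomy (f a) 0 with h0 | h0 | h0
      · have : f y / f a ≤ s := L.le_max' _ (by
          simp only [L, Finset.mem_insert, Finset.mem_image, Finset.mem_filter]
          exact Or.inr ⟨f, ⟨hf, h0⟩, rfl⟩)
        rw [div_le_iff_of_neg h0] at this
        linarith
      · rw [h0]; have := hA f hf h0.ge; linarith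
      · have hk : s = 0 ∨ ∃ g, (g ∈ F ∧ g a < 0) ∧ g y / g a = s := by
          simpa [L] using hmax
        rcases hk with hk | ⟨g, ⟨hg, hga⟩, hk⟩
        · rw [hk]; have := hA f hf h0.le; linarith
        · have h1 := hB f hf g hg h0 hga
          have h2 : g y = s * g a := by rw [← hk, div_mul_cancel₀ _ hga.ne]
          rw [h2] at h1
          have : g a * (f y - s * f a) ≤ 0 := by nlinarith
          by_contra hc
          push Not at hc
          nlinarith

/-- Every nontrivial supporting functional can be rotated onto a facet. -/
theorem exists_facet {V : Type*} [AddCommGroup V] [Module ℝ V] [FiniteDimensional ℝ V]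
    (I : Finset V) (f : Module.Dual ℝ V) (hf : ∀ β ∈ I, 0 ≤ f β) (hne : ∃ β ∈ I, f β ≠ 0) :
    ∃ (J : Finset V) (f' : Module.Dual ℝ V), J ⊆ I ∧ (∀ β ∈ I, 0 ≤ f' β) ∧
      (∀ β ∈ I, β ∈ J ↔ f' β = 0) ∧ (∀ β ∈ I, f β = 0 → β ∈ J) ∧
      Module.finrank ℝ (Submodule.span ℝ (J : Set V)) + 1 =
        Module.finrank ℝ (Submodule.span ℝ (I : Set V)) := by
  classical
  let P : Finset V → Prop := fun J => ∃ f' : Module.Dual ℝ V, (∀ β ∈ I, 0 ≤ f' β) ∧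
      (∃ β ∈ I, f' β ≠ 0) ∧ (∀ β ∈ I, β ∈ J ↔ f' β = 0) ∧ (∀ β ∈ I, f β = 0 → β ∈ J)
  have hS : (I.powerset.filter P).Nonempty :=
    ⟨I.filter (fun β => f β = 0), by
      simp only [Finset.mem_filter, Finset.mem_powerset]
      refine ⟨Finset.filter_subset _ _, f, hf, hne, ?_, ?_⟩
      · intro β hβ; simp [hβ]
      · intro β hβ h; simp [hβ, h]⟩
  obtain ⟨J, hJ, hmax⟩ := Finset.exists_max_image _ Finset.card hS
  simp only [Finset.mem_filter, Finset.mem_powerset] at hJ hmax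
  obtain ⟨hJI, f', hf', ⟨β, hβI, hβ⟩, hJf, hfJ⟩ := hJ
  refine ⟨J, f', hJI, hf', hJf, hfJ, ?_⟩
  have hker : Submodule.span ℝ (J : Set V) ≤ LinearMap.ker f' := by
    rw [Submodule.span_le]
    intro x hx
    exact (hJf x (hJI hx)).1 hx
  have hlt : Submodule.span ℝ (J : Set V) < Submodule.span ℝ (I : Set V) := by
    refine lt_of_le_of_ne (Submodule.span_mono (by exact_mod_cast hJI)) ?_
    intro h
    have : β ∈ Submodule.span ℝ (J : Set V) := by
      rw [h]; exact Submodule.subset_span hβI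
    exact hβ (hker this)
  have h1 := Submodule.finrank_lt_finrank_of_lt hlt
  by_contra hcon
  have h2 : Module.finrank ℝ (Submodule.span ℝ (J : Set V)) + 1 <
        Module.finrank ℝ (Submodule.span ℝ (I : Set V)) := by omega
  let K := Submodule.span ℝ (J : Set V) ⊔ Submodule.span ℝ {β}
  have hK : Module.finrank ℝ K ≤ Module.finrank ℝ (Submodule.span ℝ (J : Set V)) + 1 := by
    refine (Submodule.finrank_add_le_finrank_add_finrank _ _).trans ?_
    have := finrank_span_le_card (R := ℝ) ({β} : Set V)
    simp at this
    omega
  obtain ⟨γ, hγI, hγ⟩ : ∃ γ ∈ I, γ ∉ K := by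
    by_contra hc
    push Not at hc
    have : Submodule.span ℝ (I : Set V) ≤ K := Submodule.span_le.2 (fun x hx => hc x hx)
    have := Submodule.finrank_mono this
    omega
  obtain ⟨g0, hg0γ, hg0K⟩ := Submodule.exists_le_ker_of_notMem hγ
  obtain ⟨g, hgγ, hgK⟩ : ∃ g : Module.Dual ℝ V, g γ < 0 ∧ K ≤ LinearMap.ker g := by
    rcases lt_or_gt_of_ne hg0γ with h | h
    · exact ⟨g0, h, hg0K⟩
    · exact ⟨-g0, by simpa using h, fun x hx => by simpa using hg0K hx⟩
  have hgJ : ∀ x ∈ J, g x = 0 := fun x hx =>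
    hgK (Submodule.mem_sup_left (Submodule.subset_span hx))
  have hgβ : g β = 0 := hgK (Submodule.mem_sup_right (Submodule.mem_span_singleton_self β))
  obtain ⟨δ, hδ, hmin⟩ := Finset.exists_min_image (I.filter (fun x => g x < 0))
    (fun x => f' x / (- g x)) ⟨γ, by simp [hγI, hgγ]⟩
  simp only [Finset.mem_filter] at hδ hmin
  obtain ⟨hδI, hδg⟩ := hδ
  set t := f' δ / (- g δ) with ht
  have ht0 : 0 ≤ t := div_nonneg (hf' δ hδI) (by linarith)
  have htδ : f' δ + t * g δ = 0 := by
    have hne' : g δ ≠ 0 := hδg.ne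
    rw [ht, div_neg, neg_mul, div_mul_cancel₀ _ hne']; ring
  have hδJ : δ ∉ J := fun h => by rw [hgJ δ h] at hδg; exact lt_irrefl _ hδg
  let f2 : Module.Dual ℝ V := f' + t • g
  have hf2 : ∀ x, f2 x = f' x + t * g x := fun x => by simp [f2]
  let J2 := I.filter (fun x => f2 x = 0)
  have hsub : J ⊆ J2 := by
    intro x hx
    simp only [J2, Finset.mem_filter]
    refine ⟨hJI hx, ?_⟩
    rw [hf2, hgJ x hx, (hJf x (hJI hx)).1 hx]; simp
  have hss : J ⊂ J2 := by
    refine Finset.ssubset_iff_subset_ne.2 ⟨hsub, ?_⟩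
    intro h
    apply hδJ
    rw [h]
    simp only [J2, Finset.mem_filter]
    exact ⟨hδI, by rw [hf2]; exact htδ⟩
  have := hmax J2 ⟨Finset.filter_subset _ _, f2, ?_, ⟨β, hβI, ?_⟩, ?_, ?_⟩
  · have := Finset.card_lt_card hss
    omega
  · intro x hx
    rw [hf2]
    rcases lt_or_ge (g x) 0 with h | h
    · have h3 := hmin x ⟨hx, h⟩
      rw [le_div_iff₀ (by linarith)] at h3
      linarith
    · have := hf' x hx
      positivity
  · rw [hf2, hgβ]; simpa using hβ
  · intro x hx; simp [J2, hx]
  · intro x hx h; exact hsub (hfJ x hx h)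

theorem mem_cone_of_zero {V : Type*} [AddCommGroup V] [Module ℝ V]
    (I J : Finset V) (hJI : J ⊆ I) (f : Module.Dual ℝ V) (hf : ∀ β ∈ I, 0 ≤ f β)
    (hJ : ∀ β ∈ I, f β = 0 → β ∈ J) (x : V) (hx : x ∈ cone I) (hfx : f x = 0) :
    x ∈ cone J := by
  obtain ⟨c, hc, rfl⟩ := hx
  refine ⟨c, fun α hα => hc α (hJI hα), ?_⟩
  symm
  apply Finset.sum_subset hJI
  intro β hβ hβJ
  simp only [map_sum, map_smul, smul_eq_mul] at hfx
  have := (Finset.sum_eq_zero_iff_of_nonneg (fun i hi => mul_nonneg (hc i hi) (hf i hi))).1 hfx β hβ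
  rcases mul_eq_zero.1 this with h | h
  · simp [h]
  · exact absurd (hJ β hβ h) hβJ

theorem cone_mono {V : Type*} [AddCommGroup V] [Module ℝ V]
    (I J : Finset V) (hJI : J ⊆ I) : cone J ⊆ cone I := by
  classical
  rintro x ⟨c, hc, rfl⟩
  refine ⟨fun β => if β ∈ J then c β else 0, ?_, ?_⟩
  · intro α _
    by_cases h : α ∈ J
    · simp [h, hc α h]
    · simp [h]
  · rw [← Finset.sum_subset hJI]
    · apply Finset.sum_congr rfl
      intro β hβ; simp [hβ]
    · intro β _ h; simp [h]

theorem cone_nonneg {V : Type*} [AddCommGroup V] [Module ℝ V]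
    (I : Finset V) (f : Module.Dual ℝ V) (hf : ∀ β ∈ I, 0 ≤ f β) (x : V) (hx : x ∈ cone I) :
    0 ≤ f x := by
  obtain ⟨c, hc, rfl⟩ := hx
  simp only [map_sum, map_smul, smul_eq_mul]
  exact Finset.sum_nonneg (fun i hi => mul_nonneg (hc i hi) (hf i hi))

theorem cone_convex {V : Type*} [AddCommGroup V] [Module ℝ V]
    (I : Finset V) : Convex ℝ (cone I) := by
  rintro x ⟨c, hc, rfl⟩ y ⟨d, hd, rfl⟩ a b ha hb _
  refine ⟨fun β => a * c β + b * d β, fun β hβ => ?_, ?_⟩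
  · have := hc β hβ
    have := hd β hβ
    positivity
  · rw [Finset.smul_sum, Finset.smul_sum, ← Finset.sum_add_distrib]
    apply Finset.sum_congr rfl
    intro β _
    rw [add_smul, mul_smul, mul_smul]

theorem cone_sub_span {V : Type*} [AddCommGroup V] [Module ℝ V]
    (I : Finset V) (x : V) (hx : x ∈ cone I) : x ∈ Submodule.span ℝ (I : Set V) := by
  obtain ⟨c, _, rfl⟩ := hx
  exact Submodule.sum_mem _ (fun i hi => Submodule.smul_mem _ _ (Submodule.subset_span hi))

/-- Boundary points of a 1-facial cone are not time-like. -/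
theorem boundary_nonneg {V : Type*} [AddCommGroup V] [Module ℝ V] [FiniteDimensional ℝ V]
    (B : LinearMap.BilinForm ℝ V) (Δ I : Finset V) (h2 : LevelLE B Δ 2) (hI : IsFacial Δ I 1)
    (f : Module.Dual ℝ V) (hf : ∀ β ∈ I, 0 ≤ f β) (hne : ∃ β ∈ I, f β ≠ 0)
    (p : V) (hp : p ∈ cone I) (hfp : f p = 0) : 0 ≤ B p p := by
  obtain ⟨J, f', hJI, hf', hJf, hfJ, hrank⟩ := exists_facet I f hf hne
  obtain ⟨hIΔ, ⟨hsub, _, hface⟩, hIr⟩ := hI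
  refine h2 J ⟨hJI.trans hIΔ, ⟨cone_mono _ _ (hJI.trans hIΔ), cone_convex J, ?_⟩, by omega⟩ p
    (cone_sub_span J p (mem_cone_of_zero I J hJI f hf hfJ p hp hfp))
  intro x hx y hy t ht0 ht1 hxy
  obtain ⟨hxI, hyI⟩ := hface x hx y hy t ht0 ht1 (cone_mono _ _ hJI hxy)
  have h0 : f' (t • x + (1 - t) • y) = 0 := by
    obtain ⟨c, hc, h⟩ := hxy
    rw [h]
    simp only [map_sum, map_smul, smul_eq_mul]
    apply Finset.sum_eq_zero
    intro β hβ
    rw [(hJf β (hJI hβ)).1 hβ, mul_zero]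
  have hx0 := cone_nonneg I f' hf' x hxI
  have hy0 := cone_nonneg I f' hf' y hyI
  simp only [map_add, map_smul, smul_eq_mul] at h0
  have hfx : f' x = 0 := by nlinarith [mul_nonneg ht0.le hx0, mul_nonneg (sub_pos.2 ht1).le hy0]
  have hfy : f' y = 0 := by
    rw [hfx] at h0
    have : (1 - t) ≠ 0 := by linarith
    simpa [this] using h0
  exact ⟨mem_cone_of_zero I J hJI f' hf' (fun β hβ h => (hJf β hβ).2 h) x hxI hfx,
    mem_cone_of_zero I J hJI f' hf' (fun β hβ h => (hJf β hβ).2 h) y hyI hfy⟩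

theorem exists_crossing {V : Type*} [AddCommGroup V] [Module ℝ V] [FiniteDimensional ℝ V]
    (I : Finset V) (u v : V) (hu : u ∈ cone I) (hv : v ∉ cone I)
    (hvI : v ∈ Submodule.span ℝ (I : Set V)) :
    ∃ (t : ℝ) (f : Module.Dual ℝ V), 0 ≤ t ∧ t ≤ 1 ∧ (∀ β ∈ I, 0 ≤ f β) ∧ (∃ β ∈ I, f β ≠ 0) ∧
      (1 - t) • u + t • v ∈ cone I ∧ f ((1 - t) • u + t • v) = 0 := by
  classical
  obtain ⟨F, hF⟩ := cone_eq_dual I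
  have hu' := (hF u).1 hu
  have hv' : ∃ f ∈ F, f v < 0 := by
    rw [hF] at hv; push Not at hv; exact hv
  obtain ⟨f0, hf0, hf0v⟩ := hv'
  obtain ⟨f, hf, hmin⟩ := Finset.exists_min_image (F.filter (fun f => f v < 0))
    (fun f => f u / (f u - f v)) ⟨f0, by simp [hf0, hf0v]⟩
  simp only [Finset.mem_filter] at hf hmin
  obtain ⟨hfF, hfv⟩ := hf
  have hfu := hu' f hfF
  have hpos : 0 < f u - f v := by linarith
  set t := f u / (f u - f v) with ht
  have ht0 : 0 ≤ t := div_nonneg hfu hpos.le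
  have ht1 : t ≤ 1 := by rw [ht, div_le_one hpos]; linarith
  refine ⟨t, f, ht0, ht1, ?_, ?_, ?_, ?_⟩
  · intro β hβ
    refine (hF β).1 ?_ f hfF
    refine ⟨fun x => if x = β then 1 else 0, ?_, ?_⟩
    · intro x _; dsimp only; split_ifs <;> norm_num
    · simp [hβ]
  · by_contra hc
    push Not at hc
    have : Submodule.span ℝ (I : Set V) ≤ LinearMap.ker f :=
      Submodule.span_le.2 (fun x hx => hc x hx)
    have : f v = 0 := this hvI
    linarith
  · rw [hF]
    intro g hg
    have hgu := hu' g hg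
    simp only [map_add, map_smul, smul_eq_mul]
    rcases lt_or_ge (g v) 0 with h | h
    · have h3 := hmin g ⟨hg, h⟩
      rw [le_div_iff₀ (by linarith)] at h3
      linarith
    · have := mul_nonneg (sub_nonneg.2 ht1) hgu
      have := mul_nonneg ht0 h
      linarith
  · simp only [map_add, map_smul, smul_eq_mul]
    have : t * (f u - f v) = f u := by rw [ht]; field_simp
    linarith

theorem offdiag_nonpos {V : Type*} [AddCommGroup V] [Module ℝ V]
    (B : LinearMap.BilinForm ℝ V) (Δ : Finset V) (hΔ : IsRootBasis B Δ)
    (α β : V) (hα : α ∈ Δ) (hβ : β ∈ Δ) (h : α ≠ β) : B α β ≤ 0 := by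
  rcases hΔ.offdiag α hα β hβ h with h | ⟨k, hk, h⟩
  · linarith
  · rw [h]
    have hk' : (2 : ℝ) ≤ k := by exact_mod_cast hk
    have : 0 ≤ Real.cos (Real.pi / k) := by
      apply Real.cos_nonneg_of_neg_pi_div_two_le_of_le
      · have : 0 ≤ Real.pi / k := by positivity
        linarith [Real.pi_pos]
      · exact div_le_div_of_nonneg_left Real.pi_pos.le (by norm_num) hk'
    linarith

theorem exists_timelike_cone {V : Type*} [AddCommGroup V] [Module ℝ V]
    (B : LinearMap.BilinForm ℝ V) (Δ : Finset V) (hΔ : IsRootBasis B Δ) (I : Finset V)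
    (hI : I ⊆ Δ) (y : V) (hy : y ∈ Submodule.span ℝ (I : Set V)) (hyy : B y y < 0) :
    ∃ u ∈ cone I, B u u < 0 := by
  obtain ⟨c, _, rfl⟩ := Submodule.mem_span_finset.1 hy
  refine ⟨∑ β ∈ I, |c β| • β, ⟨fun β => |c β|, fun _ _ => abs_nonneg _, rfl⟩, ?_⟩
  refine lt_of_le_of_lt ?_ hyy
  simp only [map_sum, LinearMap.sum_apply, map_smul, LinearMap.smul_apply, smul_eq_mul]
  apply Finset.sum_le_sum
  intro α hα
  rw [Finset.mul_sum, Finset.mul_sum]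
  apply Finset.sum_le_sum
  intro β hβ
  by_cases h : α = β
  · subst h
    rw [← mul_assoc, ← mul_assoc, abs_mul_abs_self]
  · have h1 := offdiag_nonpos B Δ hΔ α β (hI hα) (hI hβ) h
    have h2 := offdiag_nonpos B Δ hΔ β α (hI hβ) (hI hα) (Ne.symm h)
    have h3 : c α * c β ≤ |c α| * |c β| := by rw [← abs_mul]; exact le_abs_self _
    nlinarith

/-- inequality (eqn:omega<1). For a root basis of level `2`
in a non-degenerate quadratic space and a space-like weight `ω_I`, one has
`B(α,ω_I)² ≥ B(ω_I,ω_I)` for every `α ∈ Δ∖Δ_I`, and consequently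
`B(ω_I,ω_I) ≤ 1`. -/
theorem spacelike_weight_le_one
    {V : Type*} [AddCommGroup V] [Module ℝ V] [FiniteDimensional ℝ V]
    (B : LinearMap.BilinForm ℝ V) (hsymm : ∀ x y : V, B x y = B y x)
    (hnd : B.Nondegenerate)
    (Δ : Finset V) (hΔ : IsRootBasis B Δ) (h2 : HasLevel B Δ 2)
    (I : Finset V) (ω : V) (hw : IsWeight B Δ I ω) (hsp : 0 < B ω ω) :
    (∀ α ∈ Δ, α ∉ I → B ω ω ≤ (B α ω) ^ 2) ∧ B ω ω ≤ 1 := by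
  obtain ⟨hI, hIω, hpos, hge, α₁, hα₁, hα₁I, hα₁ω⟩ := hw
  have hIΔ := hI.1
  have key : ∀ α ∈ Δ, α ∉ I → B ω ω ≤ (B α ω) ^ 2 := by
    intro α hα hαI
    -- the span of `I` is the orthogonal of `ω`
    have hH : ∀ x, B x ω = 0 → x ∈ Submodule.span ℝ (I : Set V) := by
      have hle : Submodule.span ℝ (I : Set V) ≤ LinearMap.ker (B ω) :=
        Submodule.span_le.2 (fun x hx => by
          show B ω x = 0
          rw [hsymm]; exact hIω x hx)
      have hlt : LinearMap.ker (B ω) < ⊤ := by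
        refine lt_top_iff_ne_top.2 (fun h => ?_)
        have : ω ∈ LinearMap.ker (B ω) := by rw [h]; trivial
        have : B ω ω = 0 := this
        linarith
      have h1 := Submodule.finrank_lt hlt.ne
      have h3 := hI.2.2
      have h4 := Submodule.eq_of_le_of_finrank_le hle (by omega)
      intro x hx
      rw [h4]
      show B ω x = 0
      rw [hsymm]; exact hx
    by_contra hcon
    push Not at hcon
    have h0 := h2.2 0 (by norm_num)
    unfold LevelLE at h0
    push Not at h0
    obtain ⟨_, _, y, _, hyy⟩ := h0
    have hB : B ω ω ≠ 0 := hsp.ne'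
    -- a time-like vector in the span of `I`
    obtain ⟨u, huI, huu⟩ : ∃ u ∈ cone I, B u u < 0 := by
      apply exists_timelike_cone B Δ hΔ I hIΔ (y - (B y ω / B ω ω) • ω)
      · apply hH
        simp only [map_sub, map_smul, LinearMap.sub_apply, LinearMap.smul_apply, smul_eq_mul]
        field_simp; ring
      · have : B (y - (B y ω / B ω ω) • ω) (y - (B y ω / B ω ω) • ω)
            = B y y - (B y ω) ^ 2 / B ω ω := by
          simp only [map_sub, map_smul, LinearMap.sub_apply, LinearMap.smul_apply, smul_eq_mul]
          rw [hsymm ω y]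
          field_simp; ring
        rw [this]
        have : 0 ≤ (B y ω) ^ 2 / B ω ω := by positivity
        linarith
    -- the negative of the projection of `α`
    obtain ⟨x, hx⟩ : ∃ x, x = (B α ω / B ω ω) • ω - α := ⟨_, rfl⟩
    have hxω : B x ω = 0 := by
      rw [hx]
      simp only [map_sub, map_smul, LinearMap.sub_apply, LinearMap.smul_apply, smul_eq_mul]
      field_simp; ring
    have hxx : 0 < B x x := by
      have : B x x = 1 - (B α ω) ^ 2 / B ω ω := by
        rw [hx]
        simp only [map_sub, map_smul, LinearMap.sub_apply, LinearMap.smul_apply, smul_eq_mul]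
        rw [hsymm ω α, hΔ.unit α hα]
        field_simp; ring
      rw [this, sub_pos, div_lt_one hsp]
      exact hcon
    have hxβ : ∀ β ∈ I, 0 ≤ B x β := by
      intro β hβ
      have h1 : B x β = - B α β := by
        rw [hx]
        simp only [map_sub, map_smul, LinearMap.sub_apply, LinearMap.smul_apply, smul_eq_mul]
        rw [hsymm ω β, hIω β hβ]; ring
      have := offdiag_nonpos B Δ hΔ α β hα (hIΔ hβ) (fun h => hαI (h ▸ hβ))
      linarith
    have hxI := hH x hxω
    have huω : B u ω = 0 := by
      have hle : Submodule.span ℝ (I : Set V) ≤ LinearMap.ker (B ω) :=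
        Submodule.span_le.2 (fun x hx => by
          show B ω x = 0
          rw [hsymm]; exact hIω x hx)
      rw [hsymm]
      exact hle (cone_sub_span I u huI)
    -- a time-like vector orthogonal to `x`
    obtain ⟨v, hvI, hxv, hvv, huv⟩ : ∃ v, v ∈ Submodule.span ℝ (I : Set V) ∧ B x v = 0 ∧
        B v v < 0 ∧ B u v ≤ 0 := by
      obtain ⟨w, hw⟩ : ∃ w, w = u - (B x u / B x x) • x := ⟨_, rfl⟩
      have hwI : w ∈ Submodule.span ℝ (I : Set V) := by
        rw [hw]
        exact Submodule.sub_mem _ (cone_sub_span I u huI) (Submodule.smul_mem _ _ hxI)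
      have hB' : B x x ≠ 0 := hxx.ne'
      have hxw : B x w = 0 := by
        rw [hw]
        simp only [map_sub, map_smul, smul_eq_mul]
        field_simp; ring
      have hww : B w w < 0 := by
        have : B w w = B u u - (B x u) ^ 2 / B x x := by
          rw [hw]
          simp only [map_sub, map_smul, LinearMap.sub_apply, LinearMap.smul_apply, smul_eq_mul]
          rw [hsymm u x]
          field_simp; ring
        rw [this]
        have : 0 ≤ (B x u) ^ 2 / B x x := by positivity
        linarith
      rcases le_total (B u w) 0 with h | h
      · exact ⟨w, hwI, hxw, hww, h⟩
      · exact ⟨-w, Submodule.neg_mem _ hwI, by simp [hxw], by simpa using hww, by simpa using h⟩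
    have hvc : v ∈ cone I := by
      by_contra hvc
      obtain ⟨t, f, ht0, ht1, hf, hne, hp, hfp⟩ := exists_crossing I u v huI hvc hvI
      have h1 := boundary_nonneg B Δ I h2.1 hI f hf hne _ hp hfp
      simp only [map_add, map_smul, LinearMap.add_apply, LinearMap.smul_apply, smul_eq_mul] at h1
      rw [hsymm v u] at h1
      have e1 : 0 ≤ 1 - t := by linarith
      have e2 := mul_nonneg (mul_nonneg e1 ht0) (neg_nonneg.2 huv)
      have e3 := mul_nonneg (mul_nonneg e1 e1) (neg_nonneg.2 huu.le)
      have e4 := mul_nonneg (mul_nonneg ht0 ht0) (neg_nonneg.2 hvv.le)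
      rcases eq_or_lt_of_le ht0 with h | h
      · subst h
        simp at h1; linarith
      · have e5 := mul_pos (mul_pos h h) (neg_pos.2 hvv)
        linarith
    have := boundary_nonneg B Δ I h2.1 hI (B x) hxβ ?_ v hvc hxv
    · linarith
    · by_contra hc
      push Not at hc
      have hle : Submodule.span ℝ (I : Set V) ≤ LinearMap.ker (B x) :=
        Submodule.span_le.2 (fun z hz => hc z hz)
      have : B x x = 0 := hle hxI
      linarith
  refine ⟨key, ?_⟩
  have := key α₁ hα₁ hα₁I
  rw [hα₁ω] at this
  simpa using this

end BoydMaxwell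
end

section
/- Let (Δ,Φ) be a Lorentzian based root system of level ≥ 2, and let ω_I ∈ Δ* be a weight with B(ω_I,ω_I) < 0. Then the facial subgroup W_I = ⟨s_α : α ∈ Δ_I⟩ is finite, and for every space-like weight ω ∈ Δ*, the vector Σ_{w∈W_I} w(ω) is a scalar multiple of ω_I. -/
open scoped BigOperators

namespace BoydMaxwell

variable {V : Type*} [AddCommGroup V] [Module ℝ V]

section helpers


lemma reflection_apply' (B : LinearMap.BilinForm ℝ V) (α x : V) :
    reflection B α x = x - (2 * B α x) • α := by
  simp [reflection, smul_smul, mul_comm]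

/-- The linear map attached to a word. -/
def ev (B : LinearMap.BilinForm ℝ V) : List V → (V →ₗ[ℝ] V)
  | [] => LinearMap.id
  | a :: L => (reflection B a).comp (ev B L)

lemma ev_append (B : LinearMap.BilinForm ℝ V) (L M : List V) :
    ev B (L ++ M) = (ev B L).comp (ev B M) := by
  induction L with
  | nil => simp [ev]
  | cons a L ih => simp [ev, ih, LinearMap.comp_assoc]

lemma refl_self (B : LinearMap.BilinForm ℝ V) {α : V} (h : B α α = 1) :
    reflection B α α = -α := by
  rw [reflection_apply', h]; module

lemma refl_refl (B : LinearMap.BilinForm ℝ V) {α : V} (h : B α α = 1) :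
    (reflection B α).comp (reflection B α) = LinearMap.id := by
  ext x
  simp only [LinearMap.comp_apply, reflection_apply', map_sub, map_smul, h, smul_eq_mul,
    LinearMap.id_apply]
  module

/-- Alternating word of length `k` ending in `β`. -/
def alt : V → V → ℕ → List V
  | _, _, 0 => []
  | α, β, (k+1) => alt β α k ++ [β]

/-- Alternating letter. -/
def xk : V → V → ℕ → V
  | α, _, 0 => α
  | α, β, (k+1) => xk β α k

lemma alt_length (k : ℕ) : ∀ α β : V, (alt α β k).length = k := by
  induction k with
  | zero => intro α β; rfl
  | succ k ih => intro α β; simp [alt, ih]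

lemma alt_mem (k : ℕ) : ∀ α β : V, ∀ x ∈ alt α β k, x = α ∨ x = β := by
  induction k with
  | zero => intro α β; simp [alt]
  | succ k ih =>
    intro α β x hx
    simp only [alt, List.mem_append, List.mem_singleton] at hx
    rcases hx with hx | hx
    · exact (ih β α x hx).symm
    · exact Or.inr hx

lemma xk_or (k : ℕ) : ∀ α β : V, (xk α β k = α ∧ xk β α k = β) ∨ (xk α β k = β ∧ xk β α k = α) := by
  induction k with
  | zero => intro α β; simp [xk]
  | succ k ih => intro α β; simp only [xk]; exact (ih β α).symm.imp (by tauto) (by tauto)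

lemma alt_suffix (m : ℕ) : ∀ (j : ℕ) (α β : V), ∃ e, alt α β (j + m) = e ++ alt α β m ∧
    ∀ x ∈ e, x = α ∨ x = β := by
  induction m with
  | zero => intro j α β; exact ⟨alt α β j, by simp [alt], alt_mem j α β⟩
  | succ m ih =>
    intro j α β
    obtain ⟨e, he, hm⟩ := ih j β α
    refine ⟨e, ?_, fun x hx => (hm x hx).symm⟩
    rw [← add_assoc]; simp [alt, he]

lemma ev_alt_snd (B : LinearMap.BilinForm ℝ V) (k : ℕ) (α β : V) (h : B β β = 1) :
    ev B (alt α β (k+1)) β = - ev B (alt β α k) β := by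
  simp [alt, ev_append, ev, refl_self B h]

lemma ev_alt (B : LinearMap.BilinForm ℝ V) (θ : ℝ) (hθ : Real.sin θ ≠ 0) (k : ℕ) :
    ∀ α β : V, B α α = 1 → B β β = 1 → B α β = - Real.cos θ → B β α = - Real.cos θ →
    Real.sin θ • ev B (alt α β k) α =
      Real.sin ((k+1) * θ) • xk α β k + Real.sin (k * θ) • xk β α k := by
  induction k using Nat.twoStepInduction with
  | zero => intro α β _ _ _ _; simp [alt, ev, xk]
  | one =>
    intro α β h1 h2 h3 h4
    simp only [alt, ev, xk, List.nil_append, LinearMap.comp_apply, LinearMap.id_apply,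
      reflection_apply', h4]
    have : Real.sin (((1:ℕ) + 1) * θ) = 2 * Real.sin θ * Real.cos θ := by
      rw [← Real.sin_two_mul]; congr 1; push_cast; ring
    rw [this]
    simp only [Nat.cast_one, one_mul]
    module
  | more k ih1 ih2 =>
    intro α β h1 h2 h3 h4
    have e1 : ev B (alt α β (k+2)) α =
        - ev B (alt α β k) α + (2 * Real.cos θ) • ev B (alt β α (k+1)) β := by
      rw [← ev_alt_snd B k β α h1]
      have : ev B (alt α β (k+2)) α = ev B (alt β α (k+1)) (α + (2 * Real.cos θ) • β) := by
        rw [show alt α β (k+2) = alt β α (k+1) ++ [β] from rfl, ev_append]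
        simp only [ev, LinearMap.comp_apply, LinearMap.id_apply, reflection_apply', h4]
        congr 1; module
      rw [this, map_add, map_smul]
    rw [e1, smul_add, smul_neg, smul_comm, ih1 α β h1 h2 h3 h4, ih2 β α h2 h1 h4 h3]
    simp only [xk]
    have s1 : Real.sin (((k+2:ℕ)+1) * θ) =
        2 * Real.cos θ * Real.sin (((k+1:ℕ) + 1) * θ) - Real.sin ((k+1)*θ) := by
      push_cast
      rw [show ((k:ℝ)+2+1)*θ = (k+1+1)*θ + θ by ring, show ((k:ℝ)+1)*θ = (k+1+1)*θ - θ by ring,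
        Real.sin_add, Real.sin_sub]; ring
    have s2 : Real.sin ((k+2:ℕ) * θ) =
        2 * Real.cos θ * Real.sin ((k+1:ℕ) * θ) - Real.sin (k*θ) := by
      push_cast
      rw [show ((k:ℝ)+2)*θ = (k+1)*θ + θ by ring, show ((k:ℝ))*θ = (k+1)*θ - θ by ring,
        Real.sin_add, Real.sin_sub]; ring
    rw [s1, s2]
    module

lemma sin_pos_aux {m : ℕ} (hm : 2 ≤ m) : 0 < Real.sin (Real.pi / m) := by
  have hm' : (2:ℝ) ≤ m := by exact_mod_cast hm
  apply Real.sin_pos_of_pos_of_lt_pi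
  · have := Real.pi_pos; positivity
  · rw [div_lt_iff₀ (by linarith)]; nlinarith [Real.pi_pos]

lemma ev_fix (B : LinearMap.BilinForm ℝ V) (v : V) : ∀ L : List V, (∀ x ∈ L, B x v = 0) →
    ev B L v = v := by
  intro L
  induction L with
  | nil => intro _; rfl
  | cons a L ih =>
    intro h
    simp only [ev, LinearMap.comp_apply]
    rw [ih (fun x hx => h x (by simp [hx])), reflection_apply', h a (by simp)]
    simp

lemma ev_alt_m (B : LinearMap.BilinForm ℝ V) {m : ℕ} (hm : 2 ≤ m) (α β : V)
    (h1 : B α α = 1) (h2 : B β β = 1) (h3 : B α β = - Real.cos (Real.pi / m))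
    (h4 : B β α = - Real.cos (Real.pi / m)) :
    ev B (alt α β m) α = - xk α β m ∧ ev B (alt α β m) β = - xk β α m := by
  have hs := sin_pos_aux hm
  have hm0 : (m:ℝ) ≠ 0 := by positivity
  set θ := Real.pi / m with hθ
  have hmθ : m * θ = Real.pi := by rw [hθ]; field_simp
  have hinj := smul_right_injective V hs.ne'
  constructor
  · apply hinj
    simp only
    rw [ev_alt B θ hs.ne' m α β h1 h2 h3 h4, hmθ, show ((m:ℝ)+1)*θ = θ + Real.pi by
      rw [add_mul, hmθ]; ring, Real.sin_add_pi]
    simp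
  · apply hinj
    obtain ⟨k, rfl⟩ : ∃ k, m = k + 1 := ⟨m - 1, by omega⟩
    simp only
    rw [ev_alt_snd B k α β h2, smul_neg, ev_alt B θ hs.ne' k β α h2 h1 h4 h3]
    push_cast at hmθ
    rw [hmθ, show (k:ℝ) * θ = Real.pi - θ by linarith, Real.sin_pi_sub]
    simp [xk]

lemma braid (B : LinearMap.BilinForm ℝ V) {m : ℕ} (hm : 2 ≤ m) (α β : V)
    (h1 : B α α = 1) (h2 : B β β = 1) (h3 : B α β = - Real.cos (Real.pi / m))
    (h4 : B β α = - Real.cos (Real.pi / m)) :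
    ev B (alt α β m) = ev B (alt β α m) := by
  have hs := sin_pos_aux hm
  obtain ⟨a1, a2⟩ := ev_alt_m B hm α β h1 h2 h3 h4
  obtain ⟨b1, b2⟩ := ev_alt_m B hm β α h2 h1 h4 h3
  set c := Real.cos (Real.pi / m) with hc
  have hd : 1 - c^2 ≠ 0 := by
    have := Real.sin_sq_add_cos_sq (Real.pi / m)
    have h : 1 - c^2 = Real.sin (Real.pi / m)^2 := by rw [hc]; linarith
    rw [h]; positivity
  ext v
  set a := (B α v + c * B β v) / (1 - c^2) with ha
  set b := (B β v + c * B α v) / (1 - c^2) with hb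
  set w := v - a • α - b • β with hw
  have w1 : B α w = 0 := by
    simp only [hw, map_sub, map_smul, h1, h3, smul_eq_mul, ha, hb]; field_simp; ring
  have w2 : B β w = 0 := by
    simp only [hw, map_sub, map_smul, h2, h4, smul_eq_mul, ha, hb]; field_simp; ring
  have hv : v = w + a • α + b • β := by rw [hw]; module
  have f1 := ev_fix B w (alt α β m) (fun x hx => by
    rcases alt_mem m α β x hx with rfl | rfl <;> assumption)
  have f2 := ev_fix B w (alt β α m) (fun x hx => by
    rcases alt_mem m β α x hx with rfl | rfl <;> assumption)
  rw [hv]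
  simp only [map_add, map_smul, a1, a2, b1, b2, f1, f2]

/-- `L` is not longer than any `I`-word representing `f`. -/
def MinLe (B : LinearMap.BilinForm ℝ V) (I : Finset V) (n : ℕ) (f : V →ₗ[ℝ] V) : Prop :=
  ∀ N : List V, (∀ x ∈ N, x ∈ I) → ev B N = f → n ≤ N.length

lemma word_alt (B : LinearMap.BilinForm ℝ V) (I : Finset V) {α β : V} (hα : α ∈ I) (hβ : β ∈ I)
    (h1 : B α α = 1) (h2 : B β β = 1) (p : List V) (hp : ∀ x ∈ p, x = α ∨ x = β)
    (hred : MinLe B I p.length (ev B p)) :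
    ∃ k, p = alt α β k ∨ p = alt β α k := by
  induction p using List.reverseRecOn with
  | nil => exact ⟨0, by simp [alt]⟩
  | append_singleton p x ih =>
    have hpI : ∀ y ∈ p, y ∈ I := fun y hy => by
      rcases hp y (by simp [hy]) with rfl | rfl <;> assumption
    have hxI : x ∈ I := by rcases hp x (by simp) with rfl | rfl <;> assumption
    have hxx : B x x = 1 := by rcases hp x (by simp) with rfl | rfl <;> assumption
    obtain ⟨k, hk⟩ := ih (fun y hy => hp y (by simp [hy])) (by
      intro N hN hNe
      have := hred (N ++ [x]) (by
        intro y hy; simp only [List.mem_append, List.mem_singleton] at hy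
        rcases hy with hy | rfl
        · exact hN y hy
        · exact hxI) (by rw [ev_append, ev_append, hNe])
      simpa using this)
    have hne : ∀ q, p ≠ q ++ [x] := by
      rintro q rfl
      have := hred q (fun y hy => hpI y (by simp [hy])) (by
        rw [ev_append, ev_append, LinearMap.comp_assoc]
        have : (ev B [x]).comp (ev B [x]) = LinearMap.id := by
          simpa [ev] using refl_refl B hxx
        rw [this, LinearMap.comp_id])
      simp at this
    rcases Nat.eq_zero_or_pos k with rfl | hkpos
    · have : p = [] := by simpa [alt] using hk
      subst this
      refine ⟨1, ?_⟩
      rcases hp x (by simp) with rfl | rfl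
      · right; simp [alt]
      · left; simp [alt]
    · obtain ⟨j, rfl⟩ : ∃ j, k = j + 1 := ⟨k - 1, by omega⟩
      refine ⟨j + 1 + 1, ?_⟩
      rcases hp x (by simp) with rfl | rfl
      · rcases hk with hk | hk
        · right; rw [hk]; rfl
        · exact absurd hk (hne _)
      · rcases hk with hk | hk
        · exact absurd hk (hne _)
        · left; rw [hk]; rfl

lemma dihedral (B : LinearMap.BilinForm ℝ V) (I : Finset V) {α β : V} (hα : α ∈ I) (hβ : β ∈ I)
    {m : ℕ} (hm : 2 ≤ m)
    (h1 : B α α = 1) (h2 : B β β = 1) (h3 : B α β = - Real.cos (Real.pi / m))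
    (h4 : B β α = - Real.cos (Real.pi / m)) (p : List V) (hp : ∀ x ∈ p, x = α ∨ x = β)
    (hred : MinLe B I p.length (ev B p))
    (hred' : MinLe B I p.length (ev B (p ++ [α]))) :
    ∃ a b : ℝ, 0 ≤ a ∧ 0 ≤ b ∧ ev B p α = a • α + b • β := by
  have hpI : ∀ y ∈ p, y ∈ I := fun y hy => by
    rcases hp y hy with rfl | rfl <;> assumption
  have hne : ∀ q, (∀ x ∈ q, x ∈ I) → q.length < p.length → ev B p ≠ ev B (q ++ [α]) := by
    intro q hq hl he
    have := hred' q hq (by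
        rw [ev_append, he, ev_append, LinearMap.comp_assoc]
        have : (ev B [α]).comp (ev B [α]) = LinearMap.id := by
          simpa [ev] using refl_refl B h1
        rw [this, LinearMap.comp_id])
    omega
  have key : ∃ k, p = alt α β k := by
    obtain ⟨k, hk | hk⟩ := word_alt B I hα hβ h1 h2 p hp hred
    · exact ⟨k, hk⟩
    · cases k with
      | zero => exact ⟨0, by simpa [alt] using hk⟩
      | succ k =>
        exfalso
        refine hne (alt α β k) (fun x hx => hpI x (by rw [hk]; simp [alt, hx])) ?_ (by rw [hk]; rfl)
        rw [hk]; simp [alt]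
  obtain ⟨k, hk⟩ := key
  have hkm : k < m := by
    by_contra hcon
    obtain ⟨j, rfl⟩ : ∃ j, k = j + m := ⟨k - m, by omega⟩
    obtain ⟨e, he, heI⟩ := alt_suffix m j α β
    obtain ⟨n, rfl⟩ : ∃ n, m = n + 1 := ⟨m - 1, by omega⟩
    have hlen : p.length = e.length + (n + 1) := by rw [hk, he]; simp [alt_length]
    refine hne (e ++ alt α β n) ?_ ?_ ?_
    · intro x hx
      have : x = α ∨ x = β := by
        rcases List.mem_append.1 hx with hx | hx
        · exact heI x hx
        · exact alt_mem n α β x hx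
      rcases this with rfl | rfl <;> assumption
    · rw [hlen]; simp [alt_length]
    · rw [hk, he, ev_append, braid B hm α β h1 h2 h3 h4, ← ev_append]
      simp [alt]
  have hs := sin_pos_aux hm
  set θ := Real.pi / m with hθ
  have hmpos : (0:ℝ) < m := by positivity
  have hmθ : m * θ = Real.pi := by rw [hθ]; field_simp
  have hθpos : 0 < θ := by rw [hθ]; have := Real.pi_pos; positivity
  have hform := ev_alt B θ hs.ne' k α β h1 h2 h3 h4
  have hk1 : ((k:ℝ) + 1) ≤ m := by exact_mod_cast hkm
  have n1 : 0 ≤ Real.sin ((k+1) * θ) := by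
    apply Real.sin_nonneg_of_nonneg_of_le_pi
    · positivity
    · rw [← hmθ]; gcongr
  have n2 : 0 ≤ Real.sin (k * θ) := by
    apply Real.sin_nonneg_of_nonneg_of_le_pi
    · positivity
    · rw [← hmθ]; gcongr
  have hform' : ev B p α = (Real.sin ((k+1) * θ) / Real.sin θ) • xk α β k
      + (Real.sin (k * θ) / Real.sin θ) • xk β α k := by
    apply smul_right_injective V hs.ne'
    simp only
    rw [hk, hform, smul_add, smul_smul, smul_smul, mul_div_cancel₀ _ hs.ne',
      mul_div_cancel₀ _ hs.ne']
  rcases xk_or k α β with ⟨e1, e2⟩ | ⟨e1, e2⟩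
  · exact ⟨_, _, div_nonneg n1 hs.le, div_nonneg n2 hs.le, by rw [hform', e1, e2]⟩
  · exact ⟨_, _, div_nonneg n2 hs.le, div_nonneg n1 hs.le, by rw [hform', e1, e2, add_comm]⟩

lemma cone_comb {I : Finset V} {x y : V} (hx : x ∈ cone I) (hy : y ∈ cone I) {a b : ℝ}
    (ha : 0 ≤ a) (hb : 0 ≤ b) : a • x + b • y ∈ cone I := by
  obtain ⟨c, hc, rfl⟩ := hx
  obtain ⟨d, hd, rfl⟩ := hy
  refine ⟨fun v => a * c v + b * d v, fun v hv => ?_, ?_⟩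
  · have := hc v hv
    have := hd v hv
    positivity
  · simp [Finset.smul_sum, add_smul, Finset.sum_add_distrib, mul_smul]

lemma mem_cone_self {I : Finset V} {x : V} (hx : x ∈ I) : x ∈ cone I := by
  classical
  exact ⟨fun v => if v = x then 1 else 0, fun v _ => by dsimp only; split_ifs <;> norm_num, by simp [hx]⟩

lemma pos_of (B : LinearMap.BilinForm ℝ V) (hsymm : ∀ x y : V, B x y = B y x) (I : Finset V)
    (hunit : ∀ α ∈ I, B α α = 1)
    (hoff : ∀ α ∈ I, ∀ β ∈ I, α ≠ β → ∃ k : ℕ, 2 ≤ k ∧ B α β = -Real.cos (Real.pi / k)) :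
    ∀ n : ℕ, ∀ L : List V, L.length = n → (∀ x ∈ L, x ∈ I) → MinLe B I L.length (ev B L) →
      ∀ α ∈ I, MinLe B I L.length (ev B (L ++ [α])) → ev B L α ∈ cone I := by
  intro n
  induction n using Nat.strong_induction_on with
  | _ n ih =>
  intro L hLn hLI hred α hα hredα
  rcases List.eq_nil_or_concat' L with rfl | ⟨L', β, hL⟩
  · simpa [ev] using mem_cone_self hα
  have hβ : β ∈ I := hLI β (by simp [hL])
  have hsq : ∀ x ∈ I, (ev B [x]).comp (ev B [x]) = LinearMap.id := fun x hx => by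
    simpa [ev] using refl_refl B (hunit x hx)
  have hne : α ≠ β := by
    rintro rfl
    have := hredα L' (fun x hx => hLI x (by simp [hL, hx])) (by
      rw [hL, ev_append, ev_append, LinearMap.comp_assoc, hsq α hα, LinearMap.comp_id])
    simp [hL] at this
  -- minimal factorisation
  let P : ℕ → Prop := fun k => ∃ M p : List V, M.length = k ∧ (∀ x ∈ M, x ∈ I) ∧
    (∀ x ∈ p, x = α ∨ x = β) ∧ ev B (M ++ p) = ev B L ∧ M.length + p.length = L.length
  have hP : P L'.length := ⟨L', [β], rfl, fun x hx => hLI x (by simp [hL, hx]), by simp, by rw [hL],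
    by simp [hL]⟩
  classical
  have hex : ∃ k, P k := ⟨_, hP⟩
  obtain ⟨M, p, hMk, hMI, hp, he, hlen⟩ := Nat.find_spec hex
  have hmin : ∀ k, P k → M.length ≤ k := fun k hk => hMk ▸ Nat.find_min' hex hk
  have hMlt : M.length < n := by
    have := hmin _ hP
    have : L.length = L'.length + 1 := by simp [hL]
    omega
  have hpI : ∀ y ∈ p, y ∈ I := fun y hy => by
    rcases hp y hy with rfl | rfl <;> assumption
  have hMred : MinLe B I M.length (ev B M) := by
    intro N hN hNe
    have := hred (N ++ p) (fun x hx => (List.mem_append.1 hx).elim (hN x) (hpI x))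
      (by rw [ev_append, hNe, ← ev_append, he])
    rw [List.length_append] at this
    omega
  have hMγ : ∀ γ ∈ I, (γ = α ∨ γ = β) → ev B M γ ∈ cone I := by
    intro γ hγ hγ'
    refine ih M.length hMlt M rfl hMI hMred γ hγ ?_
    intro N hN hNe
    by_contra hcon
    have hev : ev B (N ++ (γ :: p)) = ev B L := by
      rw [show γ :: p = [γ] ++ p from rfl, ev_append, hNe, ev_append, ev_append,
        LinearMap.comp_assoc, ← LinearMap.comp_assoc (ev B p), hsq γ hγ, LinearMap.id_comp,
        ← ev_append, he]
    have h5 := hred (N ++ (γ :: p)) (by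
      intro x hx
      rcases List.mem_append.1 hx with hx | hx
      · exact hN x hx
      · rcases List.mem_cons.1 hx with rfl | hx
        · exact hγ
        · exact hpI x hx) hev
    rw [List.length_append, List.length_cons] at h5
    have := hmin N.length ⟨N, γ :: p, rfl, hN, by
      intro x hx
      rcases List.mem_cons.1 hx with rfl | hx
      · exact hγ'
      · exact hp x hx, hev, by rw [List.length_cons]; omega⟩
    omega
  obtain ⟨m, hm, hB⟩ := hoff α hα β hβ hne
  obtain ⟨a, b, ha, hb, hab⟩ := dihedral B I hα hβ hm (hunit α hα) (hunit β hβ) hB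
    (by rw [hsymm, hB]) p hp
    (by
      intro N hN hNe
      have := hred (M ++ N) (fun x hx => (List.mem_append.1 hx).elim (hMI x) (hN x))
        (by rw [ev_append, hNe, ← ev_append, he])
      rw [List.length_append] at this
      omega)
    (by
      intro N hN hNe
      have := hredα (M ++ N) (fun x hx => (List.mem_append.1 hx).elim (hMI x) (hN x))
        (by rw [ev_append, hNe, ← ev_append, ← List.append_assoc, ev_append, he, ← ev_append])
      rw [List.length_append] at this
      omega)
  rw [← he, ev_append, LinearMap.comp_apply, hab, map_add, map_smul, map_smul]
  exact cone_comb (hMγ α hα (Or.inl rfl)) (hMγ β hβ (Or.inr rfl)) ha hb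

lemma root_sign (B : LinearMap.BilinForm ℝ V) (hsymm : ∀ x y : V, B x y = B y x) (I : Finset V)
    (hunit : ∀ α ∈ I, B α α = 1)
    (hoff : ∀ α ∈ I, ∀ β ∈ I, α ≠ β → ∃ k : ℕ, 2 ≤ k ∧ B α β = -Real.cos (Real.pi / k))
    (L : List V) (hL : ∀ x ∈ L, x ∈ I) (α : V) (hα : α ∈ I) :
    ev B L α ∈ cone I ∨ - ev B L α ∈ cone I := by
  classical
  have hmin : ∀ L : List V, (∀ x ∈ L, x ∈ I) → ∃ M : List V, (∀ x ∈ M, x ∈ I) ∧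
      ev B M = ev B L ∧ MinLe B I M.length (ev B M) := by
    intro L hL
    have hex : ∃ k, ∃ M : List V, M.length = k ∧ (∀ x ∈ M, x ∈ I) ∧ ev B M = ev B L :=
      ⟨_, L, rfl, hL, rfl⟩
    obtain ⟨M, hMk, hMI, hMe⟩ := Nat.find_spec hex
    refine ⟨M, hMI, hMe, fun N hN hNe => ?_⟩
    rw [hMk]
    exact Nat.find_min' hex ⟨N, rfl, hN, hNe.trans hMe⟩
  have happ : ∀ L : List V, (∀ x ∈ L, x ∈ I) → ∀ x ∈ L ++ [α], x ∈ I := by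
    intro L hL x hx
    rcases List.mem_append.1 hx with hx | hx
    · exact hL x hx
    · rw [List.mem_singleton.1 hx]; exact hα
  obtain ⟨M, hMI, hMe, hMr⟩ := hmin L hL
  obtain ⟨N, hNI, hNe, hNr⟩ := hmin (L ++ [α]) (happ L hL)
  rcases le_total M.length N.length with h | h
  · left
    rw [← hMe]
    refine pos_of B hsymm I hunit hoff _ M rfl hMI hMr α hα ?_
    intro K hK hKe
    refine h.trans (hNr K hK ?_)
    rw [hKe, hNe, ev_append, hMe, ← ev_append]
  · right
    have e : ev B (N ++ [α]) = ev B L := by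
      rw [ev_append, hNe, ev_append, LinearMap.comp_assoc]
      have : (ev B [α]).comp (ev B [α]) = LinearMap.id := by
        simpa [ev] using refl_refl B (hunit α hα)
      rw [this, LinearMap.comp_id]
    have : - ev B L α = ev B N α := by
      rw [← e, ev_append]; simp [ev, refl_self B (hunit α hα)]
    rw [this]
    refine pos_of B hsymm I hunit hoff _ N rfl hNI hNr α hα ?_
    intro K hK hKe
    exact h.trans (hMr K hK (by rw [hKe, e, hMe]))

end helpers
section helpers2

lemma finite_sep [FiniteDimensional ℝ V] (Q : LinearMap.BilinForm ℝ V)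
    (hsymm : ∀ x y : V, Q x y = Q y x) (hpos : ∀ x, x ≠ 0 → 0 < Q x x) :
    (∀ f : V →ₗ[ℝ] ℝ, ∃ δ > 0, ∀ x, Q x x < δ → |f x| < 1) ∧
    ∀ S : Set V, (∀ x ∈ S, Q x x ≤ 1) → ∀ δ > 0,
      (∀ x ∈ S, ∀ y ∈ S, Q (x - y) (x - y) < δ → x = y) → S.Finite := by
  let core : InnerProductSpace.Core ℝ V :=
    { inner := fun x y => Q x y
      conj_inner_symm := fun x y => by simpa using hsymm y x
      re_inner_nonneg := fun x => by
        by_cases h : x = 0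
        · simp [h]
        · simpa using (hpos x h).le
      add_left := fun x y z => by simp
      smul_left := fun x y r => by simp
      definite := fun x hx => by
        by_contra h
        exact (hpos x h).ne' hx }
  letI : NormedAddCommGroup V := core.toNormedAddCommGroup
  letI : InnerProductSpace ℝ V := InnerProductSpace.ofCore core.toCore
  have hQ : ∀ x : V, Q x x = ‖x‖ ^ 2 := fun x => (real_inner_self_eq_norm_sq x)
  haveI : ProperSpace V := FiniteDimensional.proper_real V
  constructor
  · intro f
    have hf : Continuous f := f.continuous_of_finiteDimensional
    have h0 := Metric.continuous_iff.1 hf 0 1 one_pos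
    obtain ⟨δ, hδ, h⟩ := h0
    refine ⟨δ ^ 2, by positivity, fun x hx => ?_⟩
    rw [hQ] at hx
    have := h x (by
      rw [dist_zero_right]
      exact lt_of_pow_lt_pow_left₀ 2 hδ.le hx)
    simpa [Real.dist_eq] using this
  · intro S hS δ hδ hsep
    have hc := isCompact_closedBall (0 : V) 1
    have he : 0 < Real.sqrt δ / 2 := by positivity
    obtain ⟨t, -, htf, hcov⟩ := hc.finite_cover_balls he
    have hS' : ∀ x ∈ S, ∃ c ∈ t, dist x c < Real.sqrt δ / 2 := by
      intro x hx
      have hx1 : x ∈ Metric.closedBall (0 : V) 1 := by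
        rw [mem_closedBall_zero_iff]
        have := hS x hx
        rw [hQ] at this
        exact (sq_le_one_iff₀ (norm_nonneg x)).1 this
      have := hcov hx1
      simpa using this
    choose! c hct hcd using hS'
    refine Set.Finite.of_finite_image (htf.subset (Set.image_subset_iff.2 hct)) ?_
    intro x hx y hy hxy
    apply hsep x hx y hy
    rw [hQ, ← dist_eq_norm]
    have h1 := hcd x hx
    have h2 := hcd y hy
    rw [← hxy] at h2
    have h3 : dist x y < Real.sqrt δ := by
      have := dist_triangle_right x y (c x)
      linarith
    calc dist x y ^ 2 < Real.sqrt δ ^ 2 := by gcongr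
      _ = δ := Real.sq_sqrt hδ.le

lemma ev_isom (B : LinearMap.BilinForm ℝ V) (hsymm : ∀ x y : V, B x y = B y x) (I : Finset V)
    (hunit : ∀ α ∈ I, B α α = 1) (L : List V) (hL : ∀ x ∈ L, x ∈ I) (x y : V) :
    B (ev B L x) (ev B L y) = B x y := by
  induction L with
  | nil => rfl
  | cons a L ih =>
    rw [← ih (fun z hz => hL z (by simp [hz]))]
    simp only [ev, LinearMap.comp_apply, reflection_apply']
    simp only [map_sub, map_smul, LinearMap.sub_apply, LinearMap.smul_apply, smul_eq_mul,
      hunit a (hL a (by simp)), hsymm _ a]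
    ring

lemma ev_rev (B : LinearMap.BilinForm ℝ V) (I : Finset V)
    (hunit : ∀ α ∈ I, B α α = 1) (L : List V) (hL : ∀ x ∈ L, x ∈ I) :
    (ev B L.reverse).comp (ev B L) = LinearMap.id := by
  induction L with
  | nil => rfl
  | cons a L ih =>
    have h := refl_refl B (hunit a (hL a (by simp)))
    rw [List.reverse_cons, ev_append]
    simp only [ev, LinearMap.comp_id]
    rw [LinearMap.comp_assoc, ← LinearMap.comp_assoc (ev B L), h, LinearMap.id_comp,
      ih (fun z hz => hL z (by simp [hz]))]

lemma ev_sub_mem (B : LinearMap.BilinForm ℝ V) (I : Finset V)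
    (L : List V) (hL : ∀ x ∈ L, x ∈ I) (x : V) :
    ev B L x - x ∈ Submodule.span ℝ (I : Set V) := by
  induction L with
  | nil => simp [ev]
  | cons a L ih =>
    have h1 := ih (fun z hz => hL z (by simp [hz]))
    have h2 : a ∈ Submodule.span ℝ (I : Set V) := Submodule.subset_span (hL a (by simp))
    simp only [ev, LinearMap.comp_apply, reflection_apply']
    have := Submodule.sub_mem _ h1 (Submodule.smul_mem _ (2 * B a (ev B L x)) h2)
    convert this using 1
    abel

lemma weyl_word (B : LinearMap.BilinForm ℝ V) (I : Finset V)
    (hunit : ∀ α ∈ I, B α α = 1) (g : V ≃ₗ[ℝ] V) (hg : g ∈ weylGroup B I) :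
    ∃ L : List V, (∀ x ∈ L, x ∈ I) ∧ (g : V →ₗ[ℝ] V) = ev B L := by
  induction hg using Subgroup.closure_induction with
  | mem g hg =>
    obtain ⟨α, hα, h⟩ := hg
    exact ⟨[α], by simpa using hα, by simpa [ev] using h⟩
  | one => exact ⟨[], by simp, rfl⟩
  | mul g h _ _ ihg ihh =>
    obtain ⟨L, hL, hg⟩ := ihg
    obtain ⟨M, hM, hh⟩ := ihh
    refine ⟨L ++ M, fun x hx => (List.mem_append.1 hx).elim (hL x) (hM x), ?_⟩
    rw [ev_append, ← hg, ← hh]; rfl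
  | inv g _ ih =>
    obtain ⟨L, hL, hg⟩ := ih
    refine ⟨L.reverse, fun x hx => hL x (by simpa using hx), ?_⟩
    have := ev_rev B I hunit L hL
    rw [← hg] at this
    ext x
    have h2 := LinearMap.congr_fun this (g⁻¹ x)
    simp only [LinearMap.comp_apply, LinearMap.id_apply] at h2
    rw [LinearEquiv.coe_coe, ← h2, LinearEquiv.coe_coe, ← LinearEquiv.mul_apply, mul_inv_cancel]
    rfl

lemma weyl_finite [FiniteDimensional ℝ V] (Q : LinearMap.BilinForm ℝ V)
    (hsymm : ∀ x y : V, Q x y = Q y x) (hpos : ∀ x, x ≠ 0 → 0 < Q x x) (I : Finset V)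
    (hunit : ∀ α ∈ I, Q α α = 1)
    (hoff : ∀ α ∈ I, ∀ β ∈ I, α ≠ β → ∃ k : ℕ, 2 ≤ k ∧ Q α β = -Real.cos (Real.pi / k))
    (hli : ∀ g : V → ℝ, ∑ δ ∈ I, g δ • δ = 0 → ∀ δ ∈ I, g δ = 0) :
    (weylGroup Q I : Set (V ≃ₗ[ℝ] V)).Finite := by
  classical
  obtain ⟨hcont, hfin⟩ := finite_sep Q hsymm hpos
  -- a functional equal to one on `I`
  have hli' : LinearIndepOn ℝ id (I : Set V) := linearIndepOn_finset_iff.2 hli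
  obtain ⟨f, hf⟩ : ∃ f : V →ₗ[ℝ] ℝ, ∀ α ∈ I, f α = 1 := by
    let b := Module.Basis.extend hli'
    refine ⟨b.constr ℝ (fun _ => (1:ℝ)), fun α hα => ?_⟩
    have hmem : α ∈ hli'.extend (Set.subset_univ _) := Module.Basis.subset_extend hli' hα
    have h1 : b ⟨α, hmem⟩ = α := Module.Basis.extend_apply_self hli' _
    have := b.constr_basis ℝ (fun _ => (1:ℝ)) ⟨α, hmem⟩
    rwa [h1] at this
  obtain ⟨δ, hδ, hδf⟩ := hcont f
  have hfc : ∀ x ∈ cone I, 0 ≤ f x := by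
    rintro x ⟨c, hc, rfl⟩
    rw [map_sum]
    refine Finset.sum_nonneg fun a ha => ?_
    rw [map_smul, hf a ha]
    simpa using hc a ha
  -- separation from a simple root
  have hsep : ∀ L : List V, (∀ x ∈ L, x ∈ I) → ∀ β ∈ I, ∀ α ∈ I,
      Q (ev Q L β - α) (ev Q L β - α) < δ → ev Q L β = α := by
    intro L hL β hβ α hα hlt
    set γ := ev Q L β with hγ
    have hγ1 : Q γ γ = 1 := by rw [hγ, ev_isom Q hsymm I hunit L hL, hunit β hβ]
    have hfγ : 0 < f γ := by
      have := hδf _ hlt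
      rw [map_sub, hf α hα, abs_lt] at this
      linarith
    have hc1 : γ ∈ cone I := by
      rcases root_sign Q hsymm I hunit hoff L hL β hβ with h | h
      · exact h
      · have := hfc _ h
        rw [map_neg, ← hγ] at this
        linarith
    have hs : ev Q (α :: L) β = γ - (2 * Q α γ) • α := by
      rw [ev, LinearMap.comp_apply, reflection_apply']
    have hfs : f (γ - (2 * Q α γ) • α) < 0 := by
      have h2 : Q (γ - (2 * Q α γ) • α + α) (γ - (2 * Q α γ) • α + α) < δ := by
        convert hlt using 1
        simp only [map_sub, map_add, map_smul, LinearMap.sub_apply, LinearMap.add_apply,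
          LinearMap.smul_apply, smul_eq_mul, hunit α hα, hsymm γ α, hγ1]
        ring
      have := hδf _ h2
      rw [map_add, hf α hα, abs_lt] at this
      linarith
    have hc2 : -(γ - (2 * Q α γ) • α) ∈ cone I := by
      rcases root_sign Q hsymm I hunit hoff (α :: L) (by
        intro x hx
        rcases List.mem_cons.1 hx with rfl | hx
        · exact hα
        · exact hL x hx) β hβ with h | h
      · have := hfc _ h
        rw [hs] at this
        linarith
      · rwa [hs] at h
    obtain ⟨c, hc, hce⟩ := hc1
    obtain ⟨d, hd, hde⟩ := hc2
    have hz := hli (fun v => c v + d v - if v = α then 2 * Q α γ else 0) (by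
      simp only [sub_smul, add_smul, Finset.sum_sub_distrib, Finset.sum_add_distrib, ite_smul,
        zero_smul, Finset.sum_ite_eq', hα, if_true, ← hce, ← hde]
      abel)
    have hcz : ∀ v ∈ I, v ≠ α → c v = 0 := by
      intro v hv hne
      have := hz v hv
      simp only [hne, if_false] at this
      linarith [hc v hv, hd v hv]
    have hγα : γ = c α • α := by
      rw [hce]
      refine Finset.sum_eq_single_of_mem α hα fun v hv hne => ?_
      rw [hcz v hv hne, zero_smul]
    rw [hγα] at hγ1
    simp only [map_smul, LinearMap.smul_apply, smul_eq_mul, hunit α hα] at hγ1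
    have : c α = 1 := by nlinarith [hc α hα]
    rw [hγα, this, one_smul]
  let S : Set V := {x | ∃ L : List V, (∀ x ∈ L, x ∈ I) ∧ ∃ α ∈ I, x = ev Q L α}
  have hSfin : S.Finite := by
    refine hfin S ?_ δ hδ ?_
    · rintro x ⟨L, hL, α, hα, rfl⟩
      rw [ev_isom Q hsymm I hunit L hL, hunit α hα]
    · rintro x ⟨L, hL, α, hα, rfl⟩ y ⟨M, hM, β, hβ, rfl⟩ hlt
      have hMr : ∀ x ∈ M.reverse, x ∈ I := fun x hx => hM x (by simpa using hx)
      have e1 : ev Q M.reverse (ev Q M β) = β :=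
        LinearMap.congr_fun (ev_rev Q I hunit M hM) β
      have e2 : ev Q (M.reverse ++ L) α = β := by
        refine hsep _ (fun x hx => (List.mem_append.1 hx).elim (hMr x) (hL x)) α hα β hβ ?_
        rw [ev_append, LinearMap.comp_apply]
        have e4 : ev Q M.reverse (ev Q L α) - β = ev Q M.reverse (ev Q L α - ev Q M β) := by
          rw [map_sub, e1]
        rw [e4, ev_isom Q hsymm I hunit _ hMr]
        exact hlt
      rw [ev_append, LinearMap.comp_apply] at e2
      have e3 := LinearMap.congr_fun (ev_rev Q I hunit M.reverse hMr) (ev Q L α)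
      rw [List.reverse_reverse, LinearMap.comp_apply, e2] at e3
      exact e3.symm
  refine Set.Finite.of_finite_image (f := fun (g : V ≃ₗ[ℝ] V) (α : I) => g (α : V))
    ((Set.Finite.pi' (fun _ : I => hSfin)).subset ?_) ?_
  · rintro _ ⟨g, hg, rfl⟩ α
    obtain ⟨L, hL, h⟩ := weyl_word Q I hunit g hg
    exact ⟨L, hL, α, α.2, LinearMap.congr_fun h α⟩
  · intro g hg h hh hgh
    obtain ⟨L, hL, hw⟩ := weyl_word Q I hunit (h⁻¹ * g) (mul_mem (inv_mem hh) hg)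
    have hfix : ∀ α ∈ I, ev Q L α = α := by
      intro α hα
      rw [← hw]
      have h1 : g α = h α := congr_fun hgh ⟨α, hα⟩
      show h⁻¹ (g α) = α
      rw [h1]
      exact h.symm_apply_apply α
    have hone : h⁻¹ * g = 1 := by
      ext x
      have e : (h⁻¹ * g) x = ev Q L x := LinearMap.congr_fun hw x
      rw [e]
      show ev Q L x = x
      set d := ev Q L x - x with hd
      have hmem : d ∈ Submodule.span ℝ (I : Set V) := ev_sub_mem Q I L hL x
      have horth : ∀ α ∈ I, Q d α = 0 := by
        intro α hα
        have h2 := ev_isom Q hsymm I hunit L hL x α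
        rw [hfix α hα] at h2
        simp [hd, h2]
      have hspan : Submodule.span ℝ (I : Set V) ≤ LinearMap.ker (Q d) := by
        rw [Submodule.span_le]
        intro α hα
        exact horth α hα
      have hdd : Q d d = 0 := hspan hmem
      have hd0 : d = 0 := by
        by_contra hne
        exact (hpos d hne).ne' hdd
      exact sub_eq_zero.1 hd0
    exact (inv_mul_eq_one.1 hone).symm

/-- orthogonal complement of a time-like vector is positive definite -/
lemma lorentz_pos (B : LinearMap.BilinForm ℝ V) (hsymm : ∀ x y : V, B x y = B y x)
    (hLor : IsLorentz B) (ω : V) (hω : B ω ω < 0) (y : V) (hy : B y ω = 0) (hy0 : y ≠ 0) :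
    0 < B y y := by
  obtain ⟨hnd, -, hdim⟩ := hLor
  have hω0 : ω ≠ 0 := by rintro rfl; simp at hω
  have hsemi : ∀ z, B z ω = 0 → 0 ≤ B z z := by
    intro z hz
    by_contra hcon
    push Not at hcon
    have hlin : LinearIndependent ℝ ![ω, z] := by
      rw [LinearIndependent.pair_iff]
      intro s t hst
      have h1 : B (s • ω + t • z) ω = 0 := by rw [hst]; simp
      have h2 : B (s • ω + t • z) z = 0 := by rw [hst]; simp
      simp [hz, hsymm ω z] at h1 h2
      exact ⟨h1.resolve_right hω.ne, h2.resolve_right hcon.ne⟩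
    have h := hdim (Submodule.span ℝ (Set.range ![ω, z])) (by
      intro v hv hv0
      rw [Matrix.range_cons, Matrix.range_cons, Matrix.range_empty, Set.union_empty,
        Set.singleton_union, Submodule.mem_span_pair] at hv
      obtain ⟨a, b, rfl⟩ := hv
      have e : B (a • ω + b • z) (a • ω + b • z) = a ^ 2 * B ω ω + b ^ 2 * B z z := by
        simp [hz, hsymm ω z]; ring
      rw [e]
      by_cases ha : a = 0
      · by_cases hb : b = 0
        · simp [ha, hb] at hv0
        · have : 0 < b ^ 2 := by positivity
          rw [ha]; nlinarith
      · have : 0 < a ^ 2 := by positivity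
        nlinarith [sq_nonneg b])
    rw [finrank_span_eq_card hlin] at h
    simp at h
  rcases (hsemi y hy).lt_or_eq with h | h
  · exact h
  exfalso
  obtain ⟨z, hz⟩ : ∃ z, B y z ≠ 0 := by
    by_contra hcon
    push Not at hcon
    exact hy0 (hnd.1 y hcon)
  set z' := z - (B z ω / B ω ω) • ω with hz'
  have h1 : B z' ω = 0 := by
    simp only [hz', map_sub, map_smul, LinearMap.sub_apply, LinearMap.smul_apply, smul_eq_mul]
    field_simp [hω.ne]; ring
  have h2 : B y z' = B y z := by simp [hz', hy]
  set s := -(B z' z' + 1) / (2 * B y z) with hs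
  have h3 := hsemi (z' + s • y) (by simp [h1, hy])
  have h4 : B (z' + s • y) (z' + s • y) = -1 := by
    have : 2 * B y z * s = -(B z' z' + 1) := by rw [hs]; field_simp
    simp only [map_add, map_smul, LinearMap.add_apply, LinearMap.smul_apply, smul_eq_mul, ← h,
      hsymm z' y, h2]
    linarith
  linarith

end helpers2

theorem timelike_weight_average
    {V : Type*} [AddCommGroup V] [Module ℝ V] [FiniteDimensional ℝ V]
    (B : LinearMap.BilinForm ℝ V) (hsymm : ∀ x y : V, B x y = B y x)
    (Δ : Finset V) (hΔ : IsRootBasis B Δ) (hLor : IsLorentz B)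
    (hlev : ∃ l : ℕ, 2 ≤ l ∧ HasLevel B Δ l)
    (I : Finset V) (ωI : V) (hw : IsWeight B Δ I ωI) (hneg : B ωI ωI < 0) :
    ((weylGroup B I : Set (V ≃ₗ[ℝ] V)).Finite) ∧
      ∀ ω ∈ weights B Δ, 0 < B ω ω →
        ∃ c : ℝ, (∑ᶠ w : (weylGroup B I : Subgroup (V ≃ₗ[ℝ] V)),
          (w : V ≃ₗ[ℝ] V) ω) = c • ωI := by
  classical
  obtain ⟨⟨hIΔ, -, hrank⟩, hort, -⟩ := hw
  have hω0 : ωI ≠ 0 := by rintro rfl; simp at hneg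
  have hunit : ∀ α ∈ I, B α α = 1 := fun α hα => hΔ.unit α (hIΔ hα)
  have hposI : ∀ c : V → ℝ, (∀ α ∈ I, 0 ≤ c α) → (∑ α ∈ I, c α • α) = 0 → ∀ α ∈ I, c α = 0 := by
    intro c hc hs α hα
    have := hΔ.posIndep (fun v => if v ∈ I then c v else 0) (fun v _ => by
      split_ifs with h
      · exact hc v h
      · exact le_rfl) (by
      simp only [ite_smul, zero_smul]
      rw [← Finset.sum_filter, Finset.filter_mem_eq_inter, Finset.inter_eq_right.2 hIΔ, hs]) α
      (hIΔ hα)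
    simpa [hα] using this
  have hBpos := lorentz_pos B hsymm hLor ωI hneg
  have hoff : ∀ α ∈ I, ∀ β ∈ I, α ≠ β →
      ∃ k : ℕ, 2 ≤ k ∧ B α β = -Real.cos (Real.pi / k) := by
    intro α hα β hβ hne
    rcases hΔ.offdiag α (hIΔ hα) β (hIΔ hβ) hne with h | h
    · exfalso
      have hab : α + β ≠ 0 := by
        intro h0
        have := hposI (fun v => if v = α ∨ v = β then 1 else 0)
          (fun v _ => by split_ifs <;> norm_num) (by
            rw [← h0, ← Finset.sum_pair (f := fun v => v) hne]
            simp only [ite_smul, one_smul, zero_smul]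
            rw [← Finset.sum_filter]
            congr 1
            ext v
            simp only [Finset.mem_filter, Finset.mem_insert, Finset.mem_singleton]
            constructor
            · exact fun h => h.2
            · rintro (rfl | rfl) <;> simp [hα, hβ]) α hα
        simp at this
      have := hBpos (α + β) (by simp [hort α hα, hort β hβ]) hab
      simp [hunit α hα, hunit β hβ, hsymm β α] at this
      linarith
    · exact h
  have hoffle : ∀ α ∈ I, ∀ β ∈ I, α ≠ β → B α β ≤ 0 := by
    intro α hα β hβ hne
    obtain ⟨k, hk, h⟩ := hoff α hα β hβ hne
    rw [h, neg_nonpos]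
    have hk' : (2:ℝ) ≤ k := by exact_mod_cast hk
    apply Real.cos_nonneg_of_mem_Icc
    constructor
    · have := Real.pi_pos
      have : 0 ≤ Real.pi / k := by positivity
      linarith
    · have := Real.pi_pos
      gcongr
  have hli : ∀ g : V → ℝ, ∑ δ ∈ I, g δ • δ = 0 → ∀ δ ∈ I, g δ = 0 := by
    intro g hg
    set P := ∑ δ ∈ I, max (g δ) 0 • δ with hP
    set N := ∑ δ ∈ I, max (-g δ) 0 • δ with hN
    have hPN : P = N := by
      rw [← sub_eq_zero, hP, hN, ← Finset.sum_sub_distrib, ← hg]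
      refine Finset.sum_congr rfl fun v _ => ?_
      rw [← sub_smul]
      congr 1
      rcases le_total (g v) 0 with h | h
      · rw [max_eq_right h, max_eq_left (by linarith)]; ring
      · rw [max_eq_left h, max_eq_right (by linarith)]; ring
    have hle : B P N ≤ 0 := by
      simp only [hP, hN, map_sum, map_smul, LinearMap.sum_apply, LinearMap.smul_apply, smul_eq_mul]
      refine Finset.sum_nonpos fun a ha => ?_
      try rw [Finset.mul_sum]
      refine Finset.sum_nonpos fun b hb => ?_
      by_cases hab : a = b
      · subst hab
        rcases le_total (g a) 0 with h | h
        · simp [max_eq_right h]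
        · simp [max_eq_right (neg_nonpos.2 h)]
      · have h1 := hoffle a ha b hb hab
        have h1' := hoffle b hb a ha (Ne.symm hab)
        have h2 : 0 ≤ max (g a) 0 := le_max_right _ _
        have h3 : 0 ≤ max (-g b) 0 := le_max_right _ _
        have h2' : 0 ≤ max (g b) 0 := le_max_right _ _
        have h3' : 0 ≤ max (-g a) 0 := le_max_right _ _
        first
          | exact mul_nonpos_of_nonneg_of_nonpos h2 (mul_nonpos_of_nonneg_of_nonpos h3 h1)
          | exact mul_nonpos_of_nonneg_of_nonpos h3 (mul_nonpos_of_nonneg_of_nonpos h2 h1)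
          | exact mul_nonpos_of_nonneg_of_nonpos h2' (mul_nonpos_of_nonneg_of_nonpos h3' h1')
          | exact mul_nonpos_of_nonneg_of_nonpos h3' (mul_nonpos_of_nonneg_of_nonpos h2' h1')
    have hPω : B P ωI = 0 := by
      simp only [hP, map_sum, map_smul, LinearMap.sum_apply, LinearMap.smul_apply, smul_eq_mul]
      exact Finset.sum_eq_zero fun v hv => by rw [hort v hv, mul_zero]
    have hP0 : P = 0 := by
      by_contra hne
      have := hBpos P hPω hne
      rw [← hPN] at hle
      linarith
    have r1 := hposI (fun v => max (g v) 0) (fun v _ => le_max_right _ _) hP0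
    have r2 := hposI (fun v => max (-g v) 0) (fun v _ => le_max_right _ _) (hPN.symm.trans hP0)
    intro v hv
    have q1 := r1 v hv
    have q2 := r2 v hv
    have q3 := le_max_left (g v) 0
    have q4 := le_max_left (-g v) 0
    linarith
  -- positive definite modification of `B`
  let Q : LinearMap.BilinForm ℝ V :=
    B - (2 / B ωI ωI) • ((B ωI).smulRight (B ωI) : V →ₗ[ℝ] V →ₗ[ℝ] ℝ)
  have hQ : ∀ x y, Q x y = B x y - 2 / B ωI ωI * (B ωI x * B ωI y) := by
    intro x y; simp [Q]
  have hQI : ∀ α ∈ I, Q α = B α := by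
    intro α hα
    ext x
    rw [hQ, hsymm ωI α, hort α hα]; ring
  have hQsymm : ∀ x y, Q x y = Q y x := by
    intro x y; rw [hQ, hQ, hsymm x y]; ring
  have hQpos : ∀ x, x ≠ 0 → 0 < Q x x := by
    intro x hx
    set t := B ωI x / B ωI ωI with ht
    have htω : B ωI x = t * B ωI ωI := by rw [ht]; field_simp [hneg.ne]
    set y := x - t • ωI with hy
    have hyω : B y ωI = 0 := by
      simp [hy, hsymm x ωI, htω]
    have hxy : x = y + t • ωI := by rw [hy]; abel
    have e : Q x x = B y y + t ^ 2 * (-B ωI ωI) := by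
      rw [hQ, htω]
      have : B x x = B y y + t ^ 2 * B ωI ωI := by
        rw [hxy]
        simp [hyω, hsymm ωI y]
        ring
      rw [this]
      field_simp [hneg.ne]
      ring
    rw [e]
    by_cases hy0 : y = 0
    · have ht0 : t ≠ 0 := by
        intro h0
        rw [hy0, h0] at hxy
        simp at hxy
        exact hx hxy
      have : 0 < t ^ 2 := by positivity
      rw [hy0]
      simp
      nlinarith
    · have := hBpos y hyω hy0
      nlinarith [sq_nonneg t]
  have hWQ : weylGroup B I = weylGroup Q I := by
    unfold weylGroup
    congr 1
    ext g
    constructor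
    · rintro ⟨α, hα, h⟩
      exact ⟨α, hα, by rw [h, reflection, reflection, hQI α hα]⟩
    · rintro ⟨α, hα, h⟩
      exact ⟨α, hα, by rw [h, reflection, reflection, hQI α hα]⟩
  have hfin : (weylGroup B I : Set (V ≃ₗ[ℝ] V)).Finite := by
    rw [hWQ]
    refine weyl_finite Q hQsymm hQpos I (fun α hα => ?_) (fun α hα => ?_) hli
    · rw [hQI α hα, hunit α hα]
    · rw [hQI α hα]; exact hoff α hα
  refine ⟨hfin, fun ω _ _ => ?_⟩
  haveI : Finite (weylGroup B I) := hfin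
  haveI := Fintype.ofFinite (weylGroup B I)
  rw [finsum_eq_sum_of_fintype]
  set v := ∑ w : weylGroup B I, (w : V ≃ₗ[ℝ] V) ω with hv
  have hvI : ∀ α ∈ I, B α v = 0 := by
    intro α hα
    let s : V ≃ₗ[ℝ] V := LinearEquiv.ofInvolutive (reflection B α)
      (fun x => LinearMap.congr_fun (refl_refl B (hunit α hα)) x)
    have hs : s ∈ weylGroup B I := Subgroup.subset_closure ⟨α, hα, by ext x; rfl⟩
    have hsv : s v = v := by
      rw [hv, map_sum]
      exact Fintype.sum_equiv (Equiv.mulLeft (⟨s, hs⟩ : weylGroup B I)) _ _ (fun w => rfl)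
    have h1 : v - (2 * B α v) • α = v := by
      rw [← reflection_apply']; exact hsv
    have h2 : B α (v - (2 * B α v) • α) = B α v := by rw [h1]
    simp [hunit α hα] at h2
    linarith
  have hrefl : B.IsRefl := fun x y h => by rw [hsymm, h]
  have hfr := LinearMap.BilinForm.finrank_orthogonal hLor.1 (Submodule.span ℝ (I : Set V))
  have hfr1 : Module.finrank ℝ (B.orthogonal (Submodule.span ℝ (I : Set V))) = 1 := by omega
  have hmem : ∀ x, (∀ α ∈ I, B α x = 0) → x ∈ B.orthogonal (Submodule.span ℝ (I : Set V)) := by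
    intro x hx
    rw [LinearMap.BilinForm.mem_orthogonal_iff]
    intro n hn
    have : Submodule.span ℝ (I : Set V) ≤ LinearMap.ker (B x) := by
      rw [Submodule.span_le]
      intro α hα
      show B x α = 0
      rw [hsymm]; exact hx α hα
    have h3 : B x n = 0 := this hn
    show B n x = 0
    rw [hsymm]; exact h3
  obtain ⟨c, hc⟩ := (finrank_eq_one_iff_of_nonzero'
    (⟨ωI, hmem ωI hort⟩ : B.orthogonal (Submodule.span ℝ (I : Set V)))
    (by simpa [Subtype.ext_iff] using hω0)).1 hfr1 ⟨v, hmem v hvI⟩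
  exact ⟨c, by simpa using (congrArg Subtype.val hc).symm⟩

end BoydMaxwell
end
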